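/- If Q is not identically zero on S₀, then for every E ∈ S₀: √(Q(E)) = sup{ |⟨J,E⟩| : J ∈ S₀*, Q*(J) = 1 }. -/

import Mathlib

open MeasureTheory

/-- `S₀`: the closed subspace of real Schwartz functions with zero mean
(the AC-condition `∫ E = 0`). -/
noncomputable def S0 : Submodule ℝ (SchwartzMap ℝ ℝ) where
  carrier := {E | ∫ s, E s = 0}
  zero_mem' := by simp
  add_mem' := by
    intro f g hf hg
    simp only [Set.mem_setOf_eq] at *
    have h : ∀ s : ℝ, (↑(f + g) : ℝ → ℝ) s = f s + g s := fun s => rfl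
    rw [show (↑(f + g) : ℝ → ℝ) = fun s => f s + g s from funext h,
      integral_add f.integrable g.integrable, hf, hg, add_zero]
  smul_mem' := by
    intro c f hf
    simp only [Set.mem_setOf_eq] at *
    have h : (↑(c • f) : ℝ → ℝ) = fun s => c • f s := rfl
    rw [h, integral_smul, hf, smul_zero]

/-- `S₀*`: the topological dual of `S₀` (continuous real-linear functionals). -/
abbrev S0d := ↥S0 →L[ℝ] ℝ

/-- Fourier transform `Ê(ν) = ∫ e^{−iνs} E(s) ds` of a Schwartz function. -/
noncomputable def fhat (E : SchwartzMap ℝ ℝ) (ν : ℝ) : ℂ :=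
  ∫ s : ℝ, Complex.exp (-(Complex.I * ν * s)) * (E s : ℂ)

/-- `B(E,E′) := ½ ∫ Re(Ê(ν)·conj(Ê′(ν))) m(dν)`. -/
noncomputable def Bform (m : Measure ℝ) (E E' : SchwartzMap ℝ ℝ) : ℝ :=
  (1/2) * ∫ ν, (fhat E ν * (starRingEnd ℂ) (fhat E' ν)).re ∂m

/-- `Q(E) := B(E,E) = ½ ∫ |Ê(ν)|² m(dν)`. -/
noncomputable def Qform (m : Measure ℝ) (E : ↥S0) : ℝ := Bform m E E

/-- The subdifferential `∂Q(E) ⊆ S₀*`. -/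
def subQ (m : Measure ℝ) (E : ↥S0) : Set S0d :=
  {J | ∀ E' : ↥S0, Qform m E' ≥ Qform m E + J (E' - E)}

/-- The Legendre–Fenchel transform `Q*(J) := sup_{E∈S₀} (2⟨J,E⟩ − Q(E))`, with values
in `[−∞,∞]` (in fact in `[0,∞]`). -/
noncomputable def Qstar (m : Measure ℝ) (J : S0d) : EReal :=
  ⨆ E : ↥S0, ((2 * J E - Qform m E : ℝ) : EReal)

/-- The subdifferential `∂Q*(J) ⊆ S₀`, with inequalities read in `[−∞,∞]`. -/
def subQstar (m : Measure ℝ) (J : S0d) : Set ↥S0 :=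
  {E | ∀ J' : S0d, Qstar m J' ≥ Qstar m J + ((J' E - J E : ℝ) : EReal)}

/-- The AC-conductivity `σ(E) := ½ ∂Q(E)`. -/
def sigmaMap (m : Measure ℝ) (E : ↥S0) : Set S0d := {J | (2:ℝ) • J ∈ subQ m E}

/-- The AC-resistivity `ρ(J) := ½ ∂Q*(J)`. -/
def rhoMap (m : Measure ℝ) (J : S0d) : Set ↥S0 := {E | (2:ℝ) • E ∈ subQstar m J}

/-- `Dom(ρ) := {J ∈ S₀* : ∂Q*(J) ≠ ∅}`. -/
def DomRho (m : Measure ℝ) : Set S0d := {J | (subQstar m J).Nonempty}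

/-!
`Q E = ‖T E‖ ^ 2` for the continuous linear map `T E = Ê / √2` from `S₀` to `L²(m)`. Testing the
bound `Q* J ≤ 1` along lines shows that it means `|J E| ≤ ‖T E‖` for all `E`. If `T E ≠ 0`,
then by Hahn–Banach some functional of norm one on `L²(m)` attains `‖T E‖` at `T E`, and its
composition `J` with `T` satisfies `Q* J = 1` and `J E = ‖T E‖`. If `T E = 0`, any functional with
`Q* J = 1` attains the supremum, and one exists because `Q ≠ 0`.
-/

section FenchelConjugate

/-- The Legendre–Fenchel transform of `Q`, in the normalisation `sup (2J - Q)` for which the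
transform of the square of a norm is the square of the dual norm. It is defined on all algebraic
functionals, since continuity plays no role in the supremum. -/
noncomputable def fenchelConjugate {V : Type*} [AddCommGroup V] [Module ℝ V] (Q : V → ℝ)
    (J : V →ₗ[ℝ] ℝ) : EReal :=
  ⨆ v, ((2 * J v - Q v : ℝ) : EReal)

variable {V F : Type*} [AddCommGroup V] [Module ℝ V] [SeminormedAddCommGroup F] [NormedSpace ℝ F]

lemma fenchelConjugate_le_coe_iff {Q : V → ℝ} {J : V →ₗ[ℝ] ℝ} {a : ℝ} :
    fenchelConjugate Q J ≤ a ↔ ∀ v, 2 * J v - Q v ≤ a := by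
  simp only [fenchelConjugate, iSup_le_iff, EReal.coe_le_coe_iff]

lemma fenchelConjugate_norm_sq_le_sq_iff (T : V →ₗ[ℝ] F) (J : V →ₗ[ℝ] ℝ) {c : ℝ}
    (hc : 0 ≤ c) :
    fenchelConjugate (fun v => ‖T v‖ ^ 2) J ≤ (c ^ 2 : ℝ) ↔ ∀ v, |J v| ≤ c * ‖T v‖ := by
  rw [fenchelConjugate_le_coe_iff]
  refine ⟨fun h v => ?_, fun h v => ?_⟩
  · have quadratic_nonneg (t : ℝ) : 0 ≤ ‖T v‖ ^ 2 * (t * t) + -2 * J v * t + c ^ 2 := by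
      have := h (t • v)
      simp only [map_smul, smul_eq_mul, norm_smul, mul_pow, Real.norm_eq_abs, sq_abs] at this
      linarith
    have discrim_nonpos := discrim_le_zero quadratic_nonneg
    rw [discrim] at discrim_nonpos
    exact abs_le_of_sq_le_sq (by linarith) (by positivity)
  · linarith [le_abs_self (J v), h v, two_mul_le_add_sq c ‖T v‖]

lemma fenchelConjugate_norm_sq_eq_one {T : V →ₗ[ℝ] F} {J : V →ₗ[ℝ] ℝ}
    (hJ : ∀ v, |J v| ≤ ‖T v‖) {w : V} (hw : ‖T w‖ ≠ 0) (hJw : J w = ‖T w‖) :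
    fenchelConjugate (fun v => ‖T v‖ ^ 2) J = 1 := by
  apply le_antisymm
  · simpa using (fenchelConjugate_norm_sq_le_sq_iff T J zero_le_one).2 (by simpa using hJ)
  · refine le_iSup_of_le (‖T w‖⁻¹ • w) (le_of_eq ?_)
    simp only [map_smul, smul_eq_mul, norm_smul, norm_inv, norm_norm, hJw, inv_mul_cancel₀ hw]
    norm_num

variable [TopologicalSpace V]

lemma exists_abs_le_norm_and_apply_eq_norm (T : V →L[ℝ] F) (w : V) :
    ∃ J : V →L[ℝ] ℝ, (∀ v, |J v| ≤ ‖T v‖) ∧ J w = ‖T w‖ := by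
  obtain ⟨g, norm_g_le, g_apply⟩ := exists_dual_vector'' ℝ (T w)
  refine ⟨g.comp T, fun v => ?_, g_apply⟩
  simpa using g.le_of_opNorm_le norm_g_le (T v)

theorem isGreatest_abs_apply_of_fenchelConjugate_eq_one (T : V →L[ℝ] F) (hT : ∃ w, ‖T w‖ ≠ 0)
    (v : V) :
    IsGreatest {x | ∃ J : V →L[ℝ] ℝ, fenchelConjugate (fun u => ‖T u‖ ^ 2) J = 1 ∧ x = |J v|}
      ‖T v‖ := by
  constructor
  · by_cases hv : ‖T v‖ = 0
    · obtain ⟨w, hw⟩ := hT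
      obtain ⟨J, J_le, J_apply⟩ := exists_abs_le_norm_and_apply_eq_norm T w
      refine ⟨J, fenchelConjugate_norm_sq_eq_one J_le hw J_apply, ?_⟩
      exact hv.trans (le_antisymm (abs_nonneg _) ((J_le v).trans hv.le))
    · obtain ⟨J, J_le, J_apply⟩ := exists_abs_le_norm_and_apply_eq_norm T v
      refine ⟨J, fenchelConjugate_norm_sq_eq_one J_le hv J_apply, ?_⟩
      rw [J_apply, abs_norm]
  · rintro _ ⟨J, hJ, rfl⟩
    have J_le := (fenchelConjugate_norm_sq_le_sq_iff (T : V →ₗ[ℝ] F) J zero_le_one).1 (by simp [hJ])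
    simpa using J_le v

end FenchelConjugate

section Fourier

open FourierTransform SchwartzMap

/-- `E ↦ Ê` as a continuous linear map between Schwartz spaces. Mathlib's `𝓕` has the kernel
`exp (-2πiνs)`, hence the dilation by `(2π)⁻¹`. -/
noncomputable def fhatCLM : 𝓢(ℝ, ℝ) →L[ℝ] 𝓢(ℝ, ℂ) :=
  (compCLMOfContinuousLinearEquiv ℝ
      (ContinuousLinearEquiv.unitsEquivAut ℝ (Units.mk0 (2 * Real.pi)⁻¹ (by positivity)))).comp
    ((fourierCLM ℝ 𝓢(ℝ, ℂ)).comp (postcompCLM Complex.ofRealCLM))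

lemma fhatCLM_apply (E : 𝓢(ℝ, ℝ)) (ν : ℝ) : fhatCLM E ν = fhat E ν := by
  have rescale : fhatCLM E ν = 𝓕 (fun s => (E s : ℂ)) (ν * (2 * Real.pi)⁻¹) := rfl
  rw [rescale, Real.fourier_real_eq_integral_exp_smul, fhat]
  congr! 4 with s
  push_cast
  field_simp

lemma norm_toLp_two_sq {D F : Type*} [NormedAddCommGroup D] [NormedSpace ℝ D] [MeasurableSpace D]
    [OpensMeasurableSpace D] [NormedAddCommGroup F] [NormedSpace ℝ F]
    [SecondCountableTopologyEither D F] (f : 𝓢(D, F)) (μ : Measure D) [μ.HasTemperateGrowth] :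
    ‖f.toLp 2 μ‖ ^ 2 = ∫ x, ‖f x‖ ^ 2 ∂μ := by
  have integral_sq_nonneg : 0 ≤ ∫ x, ‖f x‖ ^ 2 ∂μ := by positivity
  rw [norm_toLp' two_ne_zero ENNReal.ofNat_ne_top]
  simp only [ENNReal.toReal_ofNat, Real.rpow_ofNat]
  rw [← Real.rpow_mul_natCast integral_sq_nonneg]
  norm_num

variable (m : Measure ℝ) [m.HasTemperateGrowth]

/-- The continuous linear map `E ↦ Ê / √2` from `S₀` to `L²(m)`, scaled so that `Q` is the square
of its norm. -/
noncomputable def fhatL2 : S0 →L[ℝ] Lp ℂ 2 m :=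
  (√2)⁻¹ • (toLpCLM ℝ ℂ 2 m).comp (fhatCLM.comp S0.subtypeL)

lemma Qform_eq_norm_fhatL2_sq (E : S0) : Qform m E = ‖fhatL2 m E‖ ^ 2 := by
  have fhatL2_apply : fhatL2 m E = (√2)⁻¹ • (fhatCLM E).toLp 2 m := rfl
  have re_mul_conj (z : ℂ) : (z * (starRingEnd ℂ) z).re = ‖z‖ ^ 2 := by
    rw [Complex.mul_conj, Complex.ofReal_re, Complex.normSq_eq_norm_sq]
  rw [fhatL2_apply, norm_smul, mul_pow, norm_toLp_two_sq, Qform, Bform]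
  simp [fhatCLM_apply, re_mul_conj]

end Fourier

theorem statement13_general (m : Measure ℝ) [m.HasTemperateGrowth]
    (hQ : ¬ (∀ E : ↥S0, Qform m E = 0)) (E : ↥S0) :
    IsGreatest {x : ℝ | ∃ J : S0d, Qstar m J = 1 ∧ x = |J E|} (Real.sqrt (Qform m E)) := by
  have Qform_eq : Qform m = fun E => ‖fhatL2 m E‖ ^ 2 := funext (Qform_eq_norm_fhatL2_sq m)
  have Qstar_eq (J : S0d) : Qstar m J = fenchelConjugate (fun E => ‖fhatL2 m E‖ ^ 2) J := by
    rw [← Qform_eq]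
    rfl
  have fhatL2_ne_zero : ∃ E, ‖fhatL2 m E‖ ≠ 0 := by simpa [Qform_eq] using hQ
  simp only [Qstar_eq, Qform_eq, Real.sqrt_sq (norm_nonneg _)]
  exact isGreatest_abs_apply_of_fenchelConjugate_eq_one (fhatL2 m) fhatL2_ne_zero E

/-- If `Q` is not identically zero on `S₀`, then for every `E ∈ S₀`:
`√(Q(E)) = sup{ |⟨J,E⟩| : J ∈ S₀*, Q*(J) = 1 }`. -/
theorem statement13 (m : Measure ℝ) [IsFiniteMeasure m]
    (hQ : ¬ (∀ E : ↥S0, Qform m E = 0)) (E : ↥S0) :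
    Real.sqrt (Qform m E) = sSup {x : ℝ | ∃ J : S0d, Qstar m J = 1 ∧ x = |J E|} :=
  (statement13_general m hQ E).csSup_eq.symm
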